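/- arXiv:1610.03307 — 3 statements merged into one kernel-verified Lean document; each statement's English description precedes it below -/
import Mathlib

section
/- Let X be a complete, almost 3-hyperconvex metric space, let A_0 be a closed subset of X that is almost externally 3-hyperconvex in X, and let A_1, A_2 be closed subsets of X that are almost externally 2-hyperconvex in X. If A_0, A_1, A_2 are pairwise intersecting, then A_0 ∩ A_1 ∩ A_2 is nonempty. -/
/-- A metric space `X` is almost `n`-hyperconvex if for every family of `n` closed balls
`B(x i, r i)` with `d(x i, x j) ≤ r i + r j` and every `ε > 0`, the intersection
`⋂ i, B(x i, r i + ε)` is nonempty. -/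
def IsAlmostNHyperconvex (X : Type*) [MetricSpace X] (n : ℕ) : Prop :=
  ∀ (x : Fin n → X) (r : Fin n → ℝ),
    (∀ i j, dist (x i) (x j) ≤ r i + r j) →
    ∀ ε > (0 : ℝ), (⋂ i, Metric.closedBall (x i) (r i + ε)).Nonempty

/-- A subset `A` of a metric space `X` is almost externally `n`-hyperconvex in `X` if for
every family of `n` closed balls `B(x i, r i)` with `d(x i, A) ≤ r i` and
`d(x i, x j) ≤ r i + r j`, and every `ε > 0`, the intersection
`A ∩ ⋂ i, B(x i, r i + ε)` is nonempty. -/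
def IsAlmostExternallyNHyperconvex {X : Type*} [MetricSpace X] (A : Set X) (n : ℕ) : Prop :=
  ∀ (x : Fin n → X) (r : Fin n → ℝ),
    (∀ i, Metric.infDist (x i) A ≤ r i) →
    (∀ i j, dist (x i) (x j) ≤ r i + r j) →
    ∀ ε > (0 : ℝ), (A ∩ ⋂ i, Metric.closedBall (x i) (r i + ε)).Nonempty

/-!
Let `A` and `A'` meet at `y`. Starting from `y`, jump alternately into `A` and `A'` with steps of
length about `δ`. Almost external `2`-hyperconvexity lets each jump also lower the distance to a
prescribed point `x` by `δ`, until that distance is about `max (d(x, A)) (d(x, A'))`. Taking `δ`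
small and iterating with geometrically decreasing errors yields a point of `A ∩ A'`, whence
`d(x, A ∩ A') = max (d(x, A)) (d(x, A'))`.

Applied to `A₀ ∩ A₁` and `A₀ ∩ A₂`, this equality allows the same jumps, now between `A₁` and `A₂`
and starting in `A₁ ∩ A₂`, to lower the distance to `A₀` instead, all the way to `0`.
-/

open Metric Set Filter Topology

theorem isComplete_inter {α : Type*} [UniformSpace α] {s t : Set α} (hs : IsComplete s)
    (ht : IsClosed t) : IsComplete (s ∩ t) := by
  intro f hf hfst
  obtain ⟨x, hx, hfx⟩ := hs f hf (hfst.trans (principal_mono.2 inter_subset_left))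
  have : f.NeBot := hf.1
  have hft : t ∈ f := le_principal_iff.1 (hfst.trans (principal_mono.2 inter_subset_right))
  exact ⟨x, ⟨hx, ht.mem_of_tendsto hfx hft⟩, hfx⟩

section Pseudometric

variable {X : Type*} [PseudoMetricSpace X] {A A' : Set X} {φ : X → ℝ} {s : ℝ} {y : X}

theorem exists_mem_inter_dist_le_of_infDist_halving (hA : IsComplete A) (hA' : IsClosed A')
    (hne : A'.Nonempty) {C : ℝ}
    (halve : ∀ p ∈ A, ∀ δ > 0, infDist p A' ≤ δ →
      ∃ q ∈ A, infDist q A' ≤ δ / 2 ∧ dist p q ≤ C * δ)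
    {p : X} {δ : ℝ} (hp : p ∈ A) (hδ : 0 < δ) (hpA' : infDist p A' ≤ δ) :
    ∃ z ∈ A ∩ A', dist p z ≤ 2 * C * δ := by
  have next (n : ℕ) (p : {p // p ∈ A ∧ infDist p A' ≤ δ / 2 ^ n}) :
      ∃ q : {q // q ∈ A ∧ infDist q A' ≤ δ / 2 ^ (n + 1)}, dist p.1 q.1 ≤ C * (δ / 2 ^ n) := by
    obtain ⟨q, hq, hqA', hpq⟩ := halve p p.2.1 (δ / 2 ^ n) (by positivity) p.2.2
    exact ⟨⟨q, hq, by simpa only [pow_succ, div_div] using hqA'⟩, hpq⟩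
  choose f hf using next
  let u : ∀ n : ℕ, {p // p ∈ A ∧ infDist p A' ≤ δ / 2 ^ n} :=
    Nat.rec ⟨p, hp, by simpa using hpA'⟩ f
  have hu (n : ℕ) : dist (u n).1 (u (n + 1)).1 ≤ 2 * C * δ / 2 / 2 ^ n :=
    (hf n (u n)).trans_eq (by ring)
  obtain ⟨z, hzA, hz⟩ := cauchySeq_tendsto_of_isComplete hA (fun n ↦ (u n).2.1)
    (cauchySeq_of_le_geometric_two hu)
  have hbound : Tendsto (fun n : ℕ ↦ δ / 2 ^ n) atTop (𝓝 0) :=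
    tendsto_const_nhds.div_atTop (tendsto_pow_atTop_atTop_of_one_lt one_lt_two)
  have hzA' : infDist z A' ≤ 0 :=
    le_of_tendsto_of_tendsto' (((continuous_infDist_pt A').tendsto z).comp hz) hbound
      fun n ↦ (u n).2.2
  exact ⟨z, ⟨hzA, (hA'.mem_iff_infDist_zero hne).2 (hzA'.antisymm infDist_nonneg)⟩,
    dist_le_of_le_geometric_two_of_tendsto₀ hu hz⟩

/-- `DescendsInto A φ s`: every jump into `A` whose length `g` is permitted by `d(p, A) ≤ g` can be
chosen, up to an arbitrarily small error, so as to lower `φ` by `g` or down to the floor `s`. -/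
def DescendsInto (A : Set X) (φ : X → ℝ) (s : ℝ) : Prop :=
  ∀ p g ε, infDist p A ≤ g → 0 < ε → ∃ q ∈ A, dist q p ≤ g + ε ∧ φ q ≤ max s (φ p - g) + ε

namespace DescendsInto

-- Each jump costs an error `η`, so the distance to the other set may drift up from `δ`.
theorem exists_mem_of_alternating (h : DescendsInto A φ s) (h' : DescendsInto A' φ s)
    (hy : y ∈ A) (hy' : y ∈ A') {δ η : ℝ} (hδ : 0 ≤ δ) (hη : 0 < η) (n : ℕ) :
    ∃ p ∈ A, infDist p A' ≤ δ + n * η ∧ φ p ≤ max s (φ y - n * δ) + n * η ∧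
      dist p y ≤ n * (δ + n * η) := by
  induction n generalizing A A' with
  | zero => exact ⟨y, hy, by simpa [infDist_zero_of_mem hy'] using hδ, by simp, by simp⟩
  | succ n ih =>
    obtain ⟨p, hp, hpA, hφp, hpy⟩ := ih h' h hy' hy
    obtain ⟨q, hq, hqp, hφq⟩ := h p (δ + n * η) η hpA hη
    have hnη : 0 ≤ n * η := by positivity
    have hdrop : max s (φ p - (δ + n * η)) ≤ max s (φ y - (n + 1) * δ) := by
      refine max_le (le_max_left _ _) ?_
      calc φ p - (δ + n * η) ≤ max s (φ y - n * δ) - δ := by linarith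
        _ = max (s - δ) (φ y - (n + 1) * δ) := by rw [← max_sub_sub_right]; ring_nf
        _ ≤ max s (φ y - (n + 1) * δ) := max_le_max_right _ (by linarith)
    push_cast
    refine ⟨q, hq, ?_, ?_, ?_⟩
    · linarith [infDist_le_dist_of_mem (x := q) hp]
    · linarith
    · linarith [dist_triangle q p y]

theorem exists_mem_infDist_le (h : DescendsInto A φ s) (h' : DescendsInto A' φ s)
    (hy : y ∈ A) (hy' : y ∈ A') {L ε : ℝ} (hL : 0 ≤ L) (hφ : φ y ≤ s + L) (hε : 0 < ε) :
    ∃ p ∈ A, infDist p A' ≤ ε ∧ φ p ≤ s + ε ∧ dist p y ≤ L + ε := by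
  have hδ : 0 < ε / 2 := half_pos hε
  set N := ⌈L / (ε / 2)⌉₊
  have hLN : L ≤ N * (ε / 2) := (div_le_iff₀ hδ).1 (Nat.le_ceil _)
  have hNL : N * (ε / 2) ≤ L + ε / 2 := by
    have hN : (N : ℝ) ≤ L / (ε / 2) + 1 := (Nat.ceil_lt_add_one (by positivity)).le
    calc N * (ε / 2) ≤ (L / (ε / 2) + 1) * (ε / 2) := by gcongr
      _ = L + ε / 2 := by field_simp
  obtain ⟨η, hη, hNNη⟩ := exists_pos_mul_lt hδ (N * N : ℝ)
  have hNη : N * η ≤ N * N * η := by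
    gcongr
    exact_mod_cast Nat.le_mul_self N
  obtain ⟨p, hp, hpA', hφp, hpy⟩ := h.exists_mem_of_alternating h' hy hy' hδ.le hη N
  have hfloor : max s (φ y - N * (ε / 2)) = s := max_eq_left (by linarith)
  exact ⟨p, hp, by linarith, by linarith, by linarith⟩

end DescendsInto

end Pseudometric

section Metric

variable {X : Type*} [MetricSpace X] {A A' : Set X}

namespace IsAlmostExternallyNHyperconvex

theorem mono {m n : ℕ} [NeZero m] (hmn : m ≤ n) (hA : IsAlmostExternallyNHyperconvex A n) :
    IsAlmostExternallyNHyperconvex A m := by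
  intro x r hxA hx ε hε
  obtain ⟨a, ha, hball⟩ := hA (fun i ↦ x (Fin.ofNat m i)) (fun i ↦ r (Fin.ofNat m i))
    (fun i ↦ hxA _) (fun i j ↦ hx _ _) ε hε
  refine ⟨a, ha, mem_iInter.2 fun i ↦ ?_⟩
  simpa using mem_iInter.1 hball (i.castLE hmn)

theorem exists_mem_dist_le (hA : IsAlmostExternallyNHyperconvex A 2) {x₁ x₂ : X} {r₁ r₂ ε : ℝ}
    (h₁ : infDist x₁ A ≤ r₁) (h₂ : infDist x₂ A ≤ r₂) (h₁₂ : dist x₁ x₂ ≤ r₁ + r₂)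
    (hε : 0 < ε) : ∃ a ∈ A, dist a x₁ ≤ r₁ + ε ∧ dist a x₂ ≤ r₂ + ε := by
  have hr₁ : 0 ≤ r₁ := infDist_nonneg.trans h₁
  have hr₂ : 0 ≤ r₂ := infDist_nonneg.trans h₂
  obtain ⟨a, ha, hball⟩ := hA ![x₁, x₂] ![r₁, r₂] (by simp [Fin.forall_fin_two, h₁, h₂])
    (by simp [Fin.forall_fin_two, dist_comm x₂, add_comm r₂, hr₁, hr₂, h₁₂]) ε hε
  exact ⟨a, ha, by simpa [Fin.forall_fin_two] using hball⟩

theorem descendsInto_dist (hA : IsAlmostExternallyNHyperconvex A 2) {x : X} {s : ℝ}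
    (hx : infDist x A ≤ s) : DescendsInto A (dist · x) s := fun p g _ hp hε ↦
  hA.exists_mem_dist_le hp (hx.trans (le_max_left s (dist p x - g)))
    (by linarith [le_max_right s (dist p x - g)]) hε

theorem exists_mem_infDist_le (hA : IsAlmostExternallyNHyperconvex A 2)
    (hA' : IsAlmostExternallyNHyperconvex A' 2) (hne : (A ∩ A').Nonempty) {x : X} {s ε : ℝ}
    (hx : infDist x A ≤ s) (hx' : infDist x A' ≤ s) (hε : 0 < ε) :
    ∃ p ∈ A, infDist p A' ≤ ε ∧ dist x p ≤ s + ε := by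
  obtain ⟨y, hy, hy'⟩ := hne
  have hs : 0 ≤ s := infDist_nonneg.trans hx
  obtain ⟨p, hp, hpA', hpx, -⟩ := (hA.descendsInto_dist hx).exists_mem_infDist_le
    (hA'.descendsInto_dist hx') hy hy' dist_nonneg (le_add_of_nonneg_left hs) hε
  exact ⟨p, hp, hpA', dist_comm p x ▸ hpx⟩

theorem infDist_inter (hA : IsAlmostExternallyNHyperconvex A 2)
    (hA' : IsAlmostExternallyNHyperconvex A' 2) (hAc : IsComplete A) (hA'c : IsClosed A')
    (hne : (A ∩ A').Nonempty) (x : X) :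
    infDist x (A ∩ A') = max (infDist x A) (infDist x A') := by
  refine le_antisymm (le_of_forall_pos_le_add fun ε hε ↦ ?_)
    (max_le (infDist_le_infDist_of_subset inter_subset_left hne)
      (infDist_le_infDist_of_subset inter_subset_right hne))
  obtain ⟨p, hp, hpA', hxp⟩ := hA.exists_mem_infDist_le hA' hne (x := x) (ε := ε / 5)
    (le_max_left _ _) (le_max_right _ _) (by positivity)
  have halve : ∀ p ∈ A, ∀ δ > 0, infDist p A' ≤ δ →
      ∃ q ∈ A, infDist q A' ≤ δ / 2 ∧ dist p q ≤ 2 * δ := by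
    intro p hp δ hδ hpA'
    obtain ⟨q, hq, hqA', hpq⟩ := hA.exists_mem_infDist_le hA' hne
      ((infDist_zero_of_mem hp).trans_le hδ.le) hpA' (half_pos hδ)
    exact ⟨q, hq, hqA', by linarith⟩
  obtain ⟨z, hz, hpz⟩ := exists_mem_inter_dist_le_of_infDist_halving hAc hA'c hne.right halve hp
    (by positivity) hpA'
  calc infDist x (A ∩ A') ≤ dist x z := infDist_le_dist_of_mem hz
    _ ≤ dist x p + dist p z := dist_triangle x p z
    _ ≤ max (infDist x A) (infDist x A') + ε := by linarith

theorem exists_mem_inter_dist_lt (hA : IsAlmostExternallyNHyperconvex A 2)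
    (hA' : IsAlmostExternallyNHyperconvex A' 2) (hAc : IsComplete A) (hA'c : IsClosed A')
    (hne : (A ∩ A').Nonempty) {x : X} {r : ℝ} (hx : infDist x A < r) (hx' : infDist x A' < r) :
    ∃ z ∈ A ∩ A', dist x z < r :=
  (infDist_lt_iff hne).1 ((hA.infDist_inter hA' hAc hA'c hne x).trans_lt (max_lt hx hx'))

theorem descendsInto_infDist (hA : IsAlmostExternallyNHyperconvex A 2)
    (hA' : IsAlmostExternallyNHyperconvex A' 2) (hAc : IsComplete A) (hA'c : IsClosed A')
    (hne : (A ∩ A').Nonempty) : DescendsInto A (infDist · A') 0 := by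
  intro p g ε hp hε
  obtain ⟨z, ⟨hz, hz'⟩, hpz⟩ : ∃ z ∈ A ∩ A', dist p z < max g (infDist p A') + ε / 2 :=
    hA.exists_mem_inter_dist_lt hA' hAc hA'c hne
      (by linarith [le_max_left g (infDist p A')]) (by linarith [le_max_right g (infDist p A')])
  obtain ⟨q, hq, hqp, hqz⟩ :=
    hA.descendsInto_dist (infDist_zero_of_mem hz).le p g (ε / 2) hp (half_pos hε)
  refine ⟨q, hq, by linarith, ?_⟩
  have hgap : max g (infDist p A') - g = max 0 (infDist p A' - g) := by
    rw [← max_sub_sub_right, sub_self]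
  calc infDist q A' ≤ dist q z := infDist_le_dist_of_mem hz'
    _ ≤ max 0 (dist p z - g) + ε / 2 := hqz
    _ ≤ max 0 (infDist p A' - g) + ε / 2 + ε / 2 := by
      gcongr
      exact max_le (by positivity) (by linarith)
    _ = max 0 (infDist p A' - g) + ε := by ring

end IsAlmostExternallyNHyperconvex

end Metric

theorem intersection_of_three_almost_externally_hyperconvex_sets_general
    {X : Type*} [MetricSpace X] {A₀ A₁ A₂ : Set X}
    (hA₀c : IsClosed A₀) (hA₁c : IsComplete A₁) (hA₂c : IsComplete A₂)
    (hA₀ : IsAlmostExternallyNHyperconvex A₀ 2)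
    (hA₁ : IsAlmostExternallyNHyperconvex A₁ 2)
    (hA₂ : IsAlmostExternallyNHyperconvex A₂ 2)
    (h01 : (A₀ ∩ A₁).Nonempty) (h02 : (A₀ ∩ A₂).Nonempty) (h12 : (A₁ ∩ A₂).Nonempty) :
    (A₀ ∩ A₁ ∩ A₂).Nonempty := by
  have halve : ∀ y ∈ A₁ ∩ A₂, ∀ δ > 0, infDist y A₀ ≤ δ →
      ∃ z ∈ A₁ ∩ A₂, infDist z A₀ ≤ δ / 2 ∧ dist y z ≤ 2 * δ := by
    rintro y ⟨hy₁, hy₂⟩ δ hδ hy₀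
    obtain ⟨q, hq₁, hq₂, hq₀, hqy⟩ :
        ∃ q ∈ A₁, infDist q A₂ ≤ δ / 6 ∧ infDist q A₀ ≤ 0 + δ / 6 ∧ dist q y ≤ δ + δ / 6 :=
      (hA₁.descendsInto_infDist hA₀ hA₁c hA₀c (inter_comm A₀ A₁ ▸ h01)).exists_mem_infDist_le
        (hA₂.descendsInto_infDist hA₀ hA₂c hA₀c (inter_comm A₀ A₂ ▸ h02))
        hy₁ hy₂ hδ.le (by linarith) (by positivity)
    obtain ⟨z, hz, hqz⟩ : ∃ z ∈ A₁ ∩ A₂, dist q z < δ / 3 :=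
      hA₁.exists_mem_inter_dist_lt hA₂ hA₁c hA₂c.isClosed h12
        (by linarith [infDist_zero_of_mem hq₁]) (by linarith)
    refine ⟨z, hz, ?_, by linarith [dist_triangle_left y z q]⟩
    linarith [infDist_le_infDist_add_dist (s := A₀) (x := z) (y := q), dist_comm q z]
  obtain ⟨w, hw⟩ := h12
  obtain ⟨z, ⟨⟨hz₁, hz₂⟩, hz₀⟩, -⟩ := exists_mem_inter_dist_le_of_infDist_halving
    (isComplete_inter hA₁c hA₂c.isClosed) hA₀c h01.left halve hw
    (add_pos_of_nonneg_of_pos infDist_nonneg one_pos) (le_add_of_nonneg_right zero_le_one)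
  exact ⟨z, ⟨hz₀, hz₁⟩, hz₂⟩

theorem intersection_of_three_almost_externally_hyperconvex_sets
    (X : Type*) [MetricSpace X] [CompleteSpace X] (hX : IsAlmostNHyperconvex X 3)
    (A₀ A₁ A₂ : Set X) (hA₀c : IsClosed A₀) (hA₁c : IsClosed A₁) (hA₂c : IsClosed A₂)
    (hA₀ : IsAlmostExternallyNHyperconvex A₀ 3)
    (hA₁ : IsAlmostExternallyNHyperconvex A₁ 2)
    (hA₂ : IsAlmostExternallyNHyperconvex A₂ 2)
    (h01 : (A₀ ∩ A₁).Nonempty) (h02 : (A₀ ∩ A₂).Nonempty) (h12 : (A₁ ∩ A₂).Nonempty) :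
    (A₀ ∩ A₁ ∩ A₂).Nonempty :=
  intersection_of_three_almost_externally_hyperconvex_sets_general hA₀c
    hA₁c.isComplete hA₂c.isComplete (hA₀.mono (by norm_num)) hA₁ hA₂ h01 h02 h12
end

section
/- Let X be a complete, 4-hyperconvex metric space. Let A_0 ⊂ X be externally 3-hyperconvex in X and A_1 ⊂ X be externally 2-hyperconvex in X, with A_0 ∩ A_1 nonempty. Then A_0 ∩ A_1 is externally 2-hyperconvex in X. -/
/-- A metric space `X` is `n`-hyperconvex if for every family of `n` closed balls
`B(x i, r i)` with `d(x i, x j) ≤ r i + r j`, the intersection is nonempty. -/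
def IsNHyperconvex (X : Type*) [MetricSpace X] (n : ℕ) : Prop :=
  ∀ (x : Fin n → X) (r : Fin n → ℝ),
    (∀ i j, dist (x i) (x j) ≤ r i + r j) →
    (⋂ i, Metric.closedBall (x i) (r i)).Nonempty

/-- A subset `A` of a metric space `X` is externally `n`-hyperconvex in `X` if for every
family of `n` closed balls `B(x i, r i)` with `d(x i, A) ≤ r i` and
`d(x i, x j) ≤ r i + r j`, the intersection `A ∩ ⋂ i, B(x i, r i)` is nonempty. -/
def IsExternallyNHyperconvex {X : Type*} [MetricSpace X] (A : Set X) (n : ℕ) : Prop :=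
  ∀ (x : Fin n → X) (r : Fin n → ℝ),
    (∀ i, Metric.infDist (x i) A ≤ r i) →
    (∀ i j, dist (x i) (x j) ≤ r i + r j) →
    (A ∩ ⋂ i, Metric.closedBall (x i) (r i)).Nonempty

/-!
Let `A` and `B` be externally `2`-hyperconvex sets that meet, with `A` complete. Starting in
`A ∩ B` and alternating between the two sets, one can walk with arbitrarily small steps into any
ball that meets both. This produces points of `A` and `B` in the ball that are arbitrarily close to
each other; halving their distance again and again and passing to the limit shows first that a point
of `A` has a point of `A ∩ B` within its distance from `B`, and then that `A`, `B` and the ball have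
a common point.

Cutting an externally `(n + 1)`-hyperconvex set with a ball leaves an externally `n`-hyperconvex
set. Hence, when `A` is externally `(n + 1)`-hyperconvex, the balls of a family of size `n` can be
absorbed into `A` one at a time, each time keeping a common point with `B`.
-/

section Completeness

open Filter Topology

theorem isComplete_inter_of_isClosed {X : Type*} [UniformSpace X] {s t : Set X}
    (hs : IsComplete s) (ht : IsClosed t) : IsComplete (s ∩ t) := by
  intro f hf hfst
  obtain ⟨hfs, hft⟩ := le_inf_iff.1 (hfst.trans_eq inf_principal.symm)
  obtain ⟨x, hxs, hfx⟩ := hs f hf hfs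
  have := hf.1
  exact ⟨x, ⟨hxs, ht.mem_of_tendsto (f := id) hfx (le_principal_iff.1 hft)⟩, hfx⟩

theorem exists_nonpos_of_halving_step {X : Type*} [PseudoMetricSpace X] {K : Set X}
    (hK : IsComplete K) {φ : X → ℝ} (hφ : Continuous φ) {κ : ℝ}
    (step : ∀ s > 0, ∀ p ∈ K, φ p ≤ s → ∃ q ∈ K, φ q ≤ s / 2 ∧ dist p q ≤ κ * s)
    {s : ℝ} (hs : 0 ≤ s) {p : X} (hp : p ∈ K) (hps : φ p ≤ s) :
    ∃ w ∈ K, φ w ≤ 0 ∧ dist p w ≤ 2 * κ * s := by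
  rcases hs.eq_or_lt with rfl | hs
  · exact ⟨p, hp, hps, by simp⟩
  have next (n : ℕ) (p : {p : X // p ∈ K ∧ φ p ≤ s / 2 ^ n}) :
      ∃ q : {q : X // q ∈ K ∧ φ q ≤ s / 2 ^ (n + 1)}, dist p.1 q.1 ≤ 2 * κ * s / 2 / 2 ^ n := by
    obtain ⟨q, hqK, hq, hpq⟩ := step (s / 2 ^ n) (by positivity) p.1 p.2.1 p.2.2
    exact ⟨⟨q, hqK, hq.trans_eq (by ring)⟩, hpq.trans_eq (by ring)⟩
  choose g hg using next
  let u : (n : ℕ) → {p : X // p ∈ K ∧ φ p ≤ s / 2 ^ n} :=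
    fun n => Nat.rec ⟨p, hp, by simpa using hps⟩ g n
  have hu (n : ℕ) : dist (u n).1 (u (n + 1)).1 ≤ 2 * κ * s / 2 / 2 ^ n := hg n (u n)
  obtain ⟨w, hwK, hw⟩ := cauchySeq_tendsto_of_isComplete hK (fun n => (u n).2.1)
    (cauchySeq_of_le_geometric_two hu)
  have hbound : Tendsto (fun n : ℕ => s / 2 ^ n) atTop (𝓝 0) :=
    tendsto_const_nhds.div_atTop (tendsto_pow_atTop_atTop_of_one_lt one_lt_two)
  exact ⟨w, hwK, le_of_tendsto_of_tendsto' ((hφ.tendsto w).comp hw) hbound fun n => (u n).2.2,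
    dist_le_of_le_geometric_two_of_tendsto₀ hu hw⟩

end Completeness

namespace IsExternallyNHyperconvex

open Metric

variable {X : Type*} [MetricSpace X] {A B : Set X} {m n : ℕ}

theorem of_surjective {f : Fin n → Fin m} (hf : f.Surjective) (hA : IsExternallyNHyperconvex A n) :
    IsExternallyNHyperconvex A m := by
  intro x r hx hxx
  have := hA (x ∘ f) (r ∘ f) (fun i => hx (f i)) fun i j => hxx (f i) (f j)
  rwa [← hf.iInter_comp]

theorem of_le [NeZero m] (hmn : m ≤ n) (hA : IsExternallyNHyperconvex A n) :
    IsExternallyNHyperconvex A m :=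
  hA.of_surjective (Function.invFun_surjective (Fin.castLE_injective hmn))

theorem inter_closedBall_nonempty [NeZero n] (hA : IsExternallyNHyperconvex A n) {x : X} {r : ℝ}
    (hx : infDist x A ≤ r) : (A ∩ closedBall x r).Nonempty := by
  have hr : 0 ≤ r := infDist_nonneg.trans hx
  simpa only [Set.iInter_const] using hA (fun _ => x) (fun _ => r) (fun _ => hx)
    fun _ _ => (dist_self x).trans_le (add_nonneg hr hr)

theorem mem_of_infDist_eq_zero [NeZero n] (hA : IsExternallyNHyperconvex A n) {x : X}
    (hx : infDist x A = 0) : x ∈ A := by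
  simpa using hA.inter_closedBall_nonempty hx.le

protected theorem isClosed [NeZero n] (hA : IsExternallyNHyperconvex A n) : IsClosed A :=
  isClosed_of_closure_subset fun _ hx => hA.mem_of_infDist_eq_zero (infDist_zero_of_mem_closure hx)

theorem inter_closedBall (hA : IsExternallyNHyperconvex A (n + 1)) {x : X} {r : ℝ}
    (hx : infDist x A ≤ r) : IsExternallyNHyperconvex (A ∩ closedBall x r) n := by
  intro y s hy hyy
  have hne : (A ∩ closedBall x r).Nonempty := hA.inter_closedBall_nonempty hx
  have hyA (i : Fin n) : infDist (y i) A ≤ s i :=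
    (infDist_le_infDist_of_subset Set.inter_subset_left hne).trans (hy i)
  have hxy (i : Fin n) : dist x (y i) ≤ r + s i := by
    have : dist x (y i) - r ≤ infDist (y i) (A ∩ closedBall x r) :=
      (le_infDist hne).2 fun c hc => by
        linarith [dist_triangle_left x (y i) c, mem_closedBall.1 hc.2, dist_comm c (y i)]
    linarith [hy i]
  have hr : 0 ≤ r := infDist_nonneg.trans hx
  have hyx (i : Fin n) : dist (y i) x ≤ s i + r := by
    rw [dist_comm, add_comm]
    exact hxy i
  obtain ⟨a, haA, ha⟩ := hA (Fin.cons x y) (Fin.cons r s) (Fin.cases hx hyA)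
    (by simpa [Fin.forall_fin_succ, hr, hxy, hyx] using hyy)
  rw [Set.mem_iInter] at ha
  exact ⟨a, ⟨haA, ha 0⟩, Set.mem_iInter.2 fun i => ha i.succ⟩

theorem exists_dist_le_dist_le (hA : IsExternallyNHyperconvex A 2) {x y : X} {r s : ℝ}
    (hx : infDist x A ≤ r) (hy : infDist y A ≤ s) (hxy : dist x y ≤ r + s) :
    ∃ a ∈ A, dist a x ≤ r ∧ dist a y ≤ s := by
  have hr : 0 ≤ r := infDist_nonneg.trans hx
  have hs : 0 ≤ s := infDist_nonneg.trans hy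
  have hyx : dist y x ≤ s + r := by rwa [dist_comm, add_comm]
  obtain ⟨a, haA, ha⟩ := hA ![x, y] ![r, s] (by simp [Fin.forall_fin_two, hx, hy])
    (by simp [Fin.forall_fin_two, hxy, hyx, hr, hs])
  rw [Set.mem_iInter] at ha
  exact ⟨a, haA, ha 0, ha 1⟩

theorem infDist_inter_closedBall_le (hA : IsExternallyNHyperconvex A 2) {x y : X} {r s : ℝ}
    (hx : infDist x A ≤ r) (hy : infDist y A ≤ s) (hxy : dist x y ≤ r + s) :
    infDist y (A ∩ closedBall x r) ≤ s := by
  obtain ⟨a, haA, hax, hay⟩ := hA.exists_dist_le_dist_le hx hy hxy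
  have ha : a ∈ A ∩ closedBall x r := ⟨haA, hax⟩
  exact (infDist_le_dist_of_mem ha).trans (by rwa [dist_comm])

theorem exists_mem_mem_dist_le_of_dist_le_add_nat_mul (hA : IsExternallyNHyperconvex A 2)
    (hB : IsExternallyNHyperconvex B 2) {x : X} {r σ : ℝ} (hxA : infDist x A ≤ r)
    (hxB : infDist x B ≤ r) (n : ℕ) {p : X} (hpA : p ∈ A) (hpB : infDist p B ≤ σ)
    (hpx : dist p x ≤ r + n * σ) :
    ∃ a ∈ A, ∃ b ∈ B, dist a x ≤ r ∧ dist b x ≤ r ∧ dist a b ≤ σ ∧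
      dist p a ≤ (n + 1) * σ ∧ dist p b ≤ (n + 1) * σ := by
  have hσ : 0 ≤ σ := infDist_nonneg.trans hpB
  induction n generalizing A B p with
  | zero =>
    simp only [Nat.cast_zero, zero_mul, add_zero, zero_add, one_mul] at hpx ⊢
    obtain ⟨b, hbB, hbp, hbx⟩ := hB.exists_dist_le_dist_le hpB hxB (by linarith)
    rw [dist_comm] at hbp
    exact ⟨p, hpA, b, hbB, hpx, hbx, hbp, by simpa using hσ, hbp⟩
  | succ n ih =>
    push_cast at hpx ⊢
    have hxB' : infDist x B ≤ r + n * σ := hxB.trans (le_add_of_nonneg_right (by positivity))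
    obtain ⟨q, hqB, hqp, hqx⟩ := hB.exists_dist_le_dist_le hpB hxB' (by linarith)
    obtain ⟨b, hbB, a, haA, hbx, hax, hba, hqb, hqa⟩ :=
      ih hB hA hxB hxA hqB ((infDist_le_dist_of_mem hpA).trans hqp) hqx
    refine ⟨a, haA, b, hbB, hax, hbx, by rwa [dist_comm], ?_, ?_⟩
    · linarith [dist_triangle_left p a q]
    · linarith [dist_triangle_left p b q]

theorem exists_dist_le_half_infDist_le_half (hA : IsExternallyNHyperconvex A 2)
    (hB : IsExternallyNHyperconvex B 2) (hAB : (A ∩ B).Nonempty) {p : X} (hp : p ∈ A) {s : ℝ}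
    (hs : 0 < s) (hpB : infDist p B ≤ s) :
    ∃ q ∈ A, dist p q ≤ s / 2 ∧ infDist q B ≤ s / 2 := by
  obtain ⟨z, hzA, hzB⟩ := hAB
  have hpA : infDist p A = 0 := infDist_zero_of_mem hp
  obtain ⟨N, hN⟩ := Archimedean.arch (dist z p) (half_pos hs)
  rw [nsmul_eq_mul] at hN
  obtain ⟨a, haA, b, hbB, -, hbp, hab, -, -⟩ :=
    hA.exists_mem_mem_dist_le_of_dist_le_add_nat_mul hB (x := p) (σ := s / 2) (by linarith) hpB N
      hzA (by linarith [infDist_zero_of_mem hzB]) (by linarith)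
  have hbA : infDist b A ≤ s / 2 := (infDist_le_dist_of_mem haA).trans (by rwa [dist_comm])
  obtain ⟨q, hqA, hqb, hqp⟩ :=
    hA.exists_dist_le_dist_le (y := p) (s := s / 2) hbA (by linarith) (by linarith)
  exact ⟨q, hqA, by rwa [dist_comm], (infDist_le_dist_of_mem hbB).trans hqb⟩

theorem exists_mem_inter_dist_le_infDist (hA : IsExternallyNHyperconvex A 2)
    (hB : IsExternallyNHyperconvex B 2) (hAc : IsComplete A) (hAB : (A ∩ B).Nonempty)
    {p : X} (hp : p ∈ A) : ∃ z ∈ A ∩ B, dist p z ≤ infDist p B := by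
  obtain ⟨w, hwA, hwB, hpw⟩ :=
    exists_nonpos_of_halving_step hAc (continuous_infDist_pt B) (κ := 1 / 2)
      (fun s hs p hp hpB => by
        obtain ⟨q, hqA, hpq, hqB⟩ := hA.exists_dist_le_half_infDist_le_half hB hAB hp hs hpB
        exact ⟨q, hqA, hqB, hpq.trans_eq (by ring)⟩)
      infDist_nonneg hp le_rfl
  exact ⟨w, ⟨hwA, hB.mem_of_infDist_eq_zero (hwB.antisymm infDist_nonneg)⟩,
    hpw.trans_eq (by ring)⟩

theorem exists_mem_inter_dist_le_add_half (hA : IsExternallyNHyperconvex A 2)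
    (hB : IsExternallyNHyperconvex B 2) (hAc : IsComplete A) {x : X} {r s : ℝ}
    (hxA : infDist x A ≤ r) (hxB : infDist x B ≤ r) (hs : 0 ≤ s) {p : X} (hp : p ∈ A ∩ B)
    (hpx : dist p x ≤ r + s) : ∃ q ∈ A ∩ B, dist q x ≤ r + s / 2 ∧ dist p q ≤ 2 * s := by
  obtain ⟨a, haA, b, hbB, hax, -, hab, hpa, -⟩ :=
    hA.exists_mem_mem_dist_le_of_dist_le_add_nat_mul hB (σ := s / 2) hxA hxB 2 hp.1
      (by linarith [infDist_zero_of_mem hp.2]) (by push_cast; linarith)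
  push_cast at hpa
  obtain ⟨q, hq, haq⟩ := hA.exists_mem_inter_dist_le_infDist hB hAc ⟨p, hp⟩ haA
  have haq' : dist a q ≤ s / 2 := haq.trans ((infDist_le_dist_of_mem hbB).trans hab)
  refine ⟨q, hq, ?_, ?_⟩
  · linarith [dist_triangle_left q x a]
  · linarith [dist_triangle p a q]

theorem inter_inter_closedBall_nonempty (hA : IsExternallyNHyperconvex A 2)
    (hB : IsExternallyNHyperconvex B 2) (hAc : IsComplete A) (hAB : (A ∩ B).Nonempty)
    {x : X} {r : ℝ} (hxA : infDist x A ≤ r) (hxB : infDist x B ≤ r) :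
    (A ∩ B ∩ closedBall x r).Nonempty := by
  obtain ⟨z, hz⟩ := hAB
  have hr : 0 ≤ r := infDist_nonneg.trans hxA
  obtain ⟨w, hw, hwx, -⟩ :=
    exists_nonpos_of_halving_step (isComplete_inter_of_isClosed hAc hB.isClosed)
      (φ := fun p => dist p x - r) (by fun_prop) (κ := 2)
      (fun s hs p hp hpx => by
        obtain ⟨q, hq, hqx, hpq⟩ := hA.exists_mem_inter_dist_le_add_half hB hAc hxA hxB hs.le hp
          (sub_le_iff_le_add'.1 hpx)
        exact ⟨q, hq, sub_le_iff_le_add'.2 hqx, hpq⟩)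
      dist_nonneg hz (sub_le_self _ hr)
  exact ⟨w, hw, sub_nonpos.1 hwx⟩

end IsExternallyNHyperconvex

theorem inter_externally_three_and_two_hyperconvex_general {X : Type*} [MetricSpace X]
    {A B : Set X} {n : ℕ} (hAc : IsComplete A) (hA : IsExternallyNHyperconvex A (n + 1))
    (hB : IsExternallyNHyperconvex B 2) (hAB : (A ∩ B).Nonempty) :
    IsExternallyNHyperconvex (A ∩ B) n := by
  induction n generalizing A with
  | zero => exact fun _ _ _ _ => by simpa using hAB
  | succ n ih =>
    intro x r hx hxx
    have hxA (i : Fin (n + 1)) : Metric.infDist (x i) A ≤ r i :=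
      (Metric.infDist_le_infDist_of_subset Set.inter_subset_left hAB).trans (hx i)
    have hxB (i : Fin (n + 1)) : Metric.infDist (x i) B ≤ r i :=
      (Metric.infDist_le_infDist_of_subset Set.inter_subset_right hAB).trans (hx i)
    have hA₂ : IsExternallyNHyperconvex A 2 := hA.of_le (by lia)
    let C : Set X := A ∩ Metric.closedBall (x 0) (r 0)
    have hCc : IsComplete C := isComplete_inter_of_isClosed hAc Metric.isClosed_closedBall
    have hC : IsExternallyNHyperconvex C (n + 1) := hA.inter_closedBall (hxA 0)
    have hCB : (C ∩ B).Nonempty := by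
      simpa only [C, Set.inter_right_comm] using
        hA₂.inter_inter_closedBall_nonempty hB hAc hAB (hxA 0) (hxB 0)
    have hxCB (i : Fin n) : Metric.infDist (x i.succ) (C ∩ B) ≤ r i.succ := by
      have hxC : Metric.infDist (x i.succ) C ≤ r i.succ :=
        hA₂.infDist_inter_closedBall_le (hxA 0) (hxA i.succ) (hxx 0 i.succ)
      have hC₂ : IsExternallyNHyperconvex C 2 := hC.of_le (by have := i.pos; lia)
      obtain ⟨w, hw, hwx⟩ := hC₂.inter_inter_closedBall_nonempty hB hCc hCB hxC (hxB i.succ)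
      exact (Metric.infDist_le_dist_of_mem hw).trans (Metric.mem_closedBall'.1 hwx)
    obtain ⟨w, ⟨⟨hwA, hw₀⟩, hwB⟩, hw⟩ :=
      ih hCc hC hCB (x ∘ Fin.succ) (r ∘ Fin.succ) hxCB fun i j => hxx i.succ j.succ
    exact ⟨w, ⟨hwA, hwB⟩, Set.mem_iInter.2 (Fin.cases hw₀ (Set.mem_iInter.1 hw))⟩

theorem inter_externally_three_and_two_hyperconvex
    (X : Type*) [MetricSpace X] [CompleteSpace X] (hX : IsNHyperconvex X 4)
    (A₀ A₁ : Set X)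
    (hA₀ : IsExternallyNHyperconvex A₀ 3) (hA₁ : IsExternallyNHyperconvex A₁ 2)
    (h01 : (A₀ ∩ A₁).Nonempty) :
    IsExternallyNHyperconvex (A₀ ∩ A₁) 2 :=
  inter_externally_three_and_two_hyperconvex_general hA₀.isClosed.isComplete hA₀ hA₁ h01
end

section
/- The collection of weakly externally hyperconvex subsets of ℝⁿ equipped with the maximum norm (i.e. of l∞ⁿ) is a Helly family of order n+1: for any finite family of weakly externally hyperconvex subsets of l∞ⁿ such that every n+1 of them have a common point, the whole family has a common point. -/
/-- `A` is weakly externally hyperconvex in `X`: for every `x ∈ X`, `A` is externally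
hyperconvex in the metric subspace `A ∪ {x}`, i.e. every family of closed balls (given as
a set of center–radius pairs) with centers in `A ∪ {x}`, radii at least the distance from
the center to `A`, and pairwise satisfying `d(p.1,q.1) ≤ p.2 + q.2`, intersects `A`. -/
def IsWeaklyExternallyHyperconvex {X : Type*} [MetricSpace X] (A : Set X) : Prop :=
  ∀ x : X, ∀ S : Set (X × ℝ),
    (∀ p ∈ S, p.1 ∈ A ∪ {x}) →
    (∀ p ∈ S, Metric.infDist p.1 A ≤ p.2) →
    (∀ p ∈ S, ∀ q ∈ S, dist p.1 q.1 ≤ p.2 + q.2) →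
    (A ∩ ⋂ p ∈ S, Metric.closedBall p.1 p.2).Nonempty

/-!
In `ℓ∞ⁿ` a weakly externally hyperconvex set `A` is convex in the linear sense, so the classical
theorem of Helly applies.

A coordinate half-space agrees with a large ball on any bounded region, and so does an orthant, an
intersection of half-spaces that bound distinct coordinates. Weak external hyperconvexity allows one
ball with arbitrary center, so if `A` meets an orthant, it does so inside every family of balls
centered in `A` that pairwise meet each other and, measured by the violated inequalities, the
orthant. Bouncing between the three orthants obtained by dropping one of three constraints halves
the amount by which the dropped constraint is violated. Hence `A` comes arbitrarily close to
satisfying all constraints of an orthant as soon as it can satisfy any two of them.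

Let `p` lie on a segment with endpoints in `A`. Two constraints with vertex `p` can be satisfied:
a linear functional is at most its value at `p` at one of the endpoints, and if the sum of the two
violations is nonpositive at a point, then repairing one constraint by moving that point costs no
more than the slack in the other. If the distance `d` from `p` to `A` were positive and `y` a
nearest point, then moving `y` within `A` by `d / 2` towards the orthant at `p` opposite to `y`
would bring it within `d / 2` of `p`.
-/

section Orthant

variable {ι : Type*} {σ b b' x y : ι → ℝ} {T T' : Finset ι} {i j : ι} {r : ℝ}

/-- The orthant cut out by the inequalities `σ i * y i ≤ b i` for `i ∈ T`; coordinates outside `T`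
are unconstrained. The vector `σ` of signs, with `|σ i| = 1`, orients the half-spaces. The points
violating each inequality by at most `r` form `orthant σ (fun i ↦ b i + r) T`, and the orthants
with vertex `p` are those with `b = σ * p`. -/
def orthant (σ b : ι → ℝ) (T : Finset ι) : Set (ι → ℝ) :=
  {y | ∀ i ∈ T, σ i * y i ≤ b i}

lemma orthant_subset_orthant (hb : b ≤ b') (hT : T' ⊆ T) : orthant σ b T ⊆ orthant σ b' T' :=
  fun _ hy i hi ↦ (hy i (hT hi)).trans (hb i)

lemma mem_orthant_of_mem_erase_of_mem_erase [DecidableEq ι] (hij : i ≠ j)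
    (hi : y ∈ orthant σ b (T.erase i)) (hj : y ∈ orthant σ b (T.erase j)) : y ∈ orthant σ b T := by
  intro k hk
  obtain rfl | hki := eq_or_ne k i
  · exact hj k (Finset.mem_erase.2 ⟨hij, hk⟩)
  · exact hi k (Finset.mem_erase.2 ⟨hki, hk⟩)

lemma mem_orthant_add_of_mem_erase [DecidableEq ι] (hr : 0 ≤ r)
    (hy : y ∈ orthant σ b (T.erase i)) (hi : σ i * y i ≤ b i + r) :
    y ∈ orthant σ (fun i ↦ b i + r) T := by
  intro j hj
  obtain rfl | hji := eq_or_ne j i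
  · exact hi
  · exact le_add_of_le_of_nonneg (hy j (Finset.mem_erase.2 ⟨hji, hj⟩)) hr

variable [Fintype ι]

lemma sign_mul_le_add_dist (hσ : |σ i| = 1) (x y : ι → ℝ) : σ i * y i ≤ σ i * x i + dist y x := by
  have hxy : σ i * (y i - x i) ≤ dist y x := calc
    σ i * (y i - x i) ≤ |y i - x i| := by
      simpa [abs_mul, hσ] using le_abs_self (σ i * (y i - x i))
    _ ≤ dist y x := dist_le_pi_dist y x i
  linarith

lemma mem_orthant_add_of_dist_le (hσ : ∀ i, |σ i| = 1) (hx : x ∈ orthant σ b T)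
    (hyx : dist y x ≤ r) : y ∈ orthant σ (fun i ↦ b i + r) T :=
  fun i hi ↦ (sign_mul_le_add_dist (hσ i) x y).trans (add_le_add (hx i hi) hyx)

lemma exists_closedBall_subset_orthant (hσ : ∀ i, |σ i| = 1) (b : ι → ℝ) (T : Finset ι)
    (c : ι → ℝ) {ρ : ℝ} (hρ : 0 ≤ ρ) :
    ∃ x R, Metric.closedBall x R ⊆ orthant σ b T ∧
      ∀ y r, y ∈ orthant σ (fun i ↦ b i + r) T → dist y c ≤ ρ + r → dist x y ≤ R + r := by
  classical
  set R := ρ + dist c (σ * b)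
  have hR : 0 ≤ R := by positivity
  have sign_cases (i : ι) : σ i = 1 ∨ σ i = -1 := eq_or_eq_neg_of_abs_eq (hσ i)
  refine ⟨T.piecewise (fun i ↦ σ i * (b i - R)) c, R, fun y hy i hi ↦ ?_, fun y r hyT hyc ↦ ?_⟩
  · have hyi := (dist_le_pi_dist y _ i).trans hy
    rw [Finset.piecewise_eq_of_mem _ _ _ hi, Real.dist_eq, abs_le] at hyi
    obtain hσi | hσi := sign_cases i <;> rw [hσi] at hyi ⊢ <;> linarith
  · have hRr : dist y (σ * b) ≤ R + r := by linarith [dist_triangle y c (σ * b)]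
    refine (dist_pi_le_iff (dist_nonneg.trans hRr)).2 fun i ↦ ?_
    by_cases hi : i ∈ T
    · have hyi := (dist_le_pi_dist y (σ * b) i).trans hRr
      have hyTi : σ i * y i ≤ b i + r := hyT i hi
      rw [Pi.mul_apply, Real.dist_eq, abs_le] at hyi
      rw [Finset.piecewise_eq_of_mem _ _ _ hi, Real.dist_eq, abs_le]
      obtain hσi | hσi := sign_cases i <;> rw [hσi] at hyi hyTi ⊢ <;> constructor <;> linarith
    · rw [Finset.piecewise_eq_of_notMem _ _ _ hi, dist_comm]
      linarith [dist_le_pi_dist y c i, dist_nonneg (x := c) (y := σ * b)]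

end Orthant

namespace IsWeaklyExternallyHyperconvex

section MetricSpace

variable {X : Type*} [MetricSpace X] {A : Set X}

lemma inter_closedBall_inter_nonempty (hA : IsWeaklyExternallyHyperconvex A) {x : X} {R : ℝ}
    (hx : Metric.infDist x A ≤ R) {S : Set (X × ℝ)} (hS : ∀ q ∈ S, q.1 ∈ A)
    (hSS : ∀ q ∈ S, ∀ q' ∈ S, dist q.1 q'.1 ≤ q.2 + q'.2) (hxS : ∀ q ∈ S, dist x q.1 ≤ R + q.2) :
    (A ∩ (Metric.closedBall x R ∩ ⋂ q ∈ S, Metric.closedBall q.1 q.2)).Nonempty := by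
  have hR : 0 ≤ R := Metric.infDist_nonneg.trans hx
  have hS_radius : ∀ q ∈ S, 0 ≤ q.2 := fun q hq ↦ by
    linarith [hSS q hq q hq, dist_self q.1]
  rw [← Set.biInter_insert (x, R) S fun q ↦ Metric.closedBall q.1 q.2]
  refine hA x (insert (x, R) S) ?_ ?_ ?_
  · rintro q (rfl | hq)
    exacts [Or.inr rfl, Or.inl (hS q hq)]
  · rintro q (rfl | hq)
    exacts [hx, (Metric.infDist_zero_of_mem (hS q hq)).trans_le (hS_radius q hq)]
  · rintro q (rfl | hq) q' (rfl | hq')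
    · rw [dist_self]
      positivity
    · exact hxS q' hq'
    · rw [dist_comm, add_comm]
      exact hxS q hq
    · exact hSS q hq q' hq'

lemma exists_mem_dist_le_infDist (hA : IsWeaklyExternallyHyperconvex A) (x : X) :
    ∃ y ∈ A, dist y x ≤ Metric.infDist x A := by
  simpa [Set.Nonempty] using
    hA.inter_closedBall_inter_nonempty (S := ∅) (le_refl (Metric.infDist x A))
      (by simp) (by simp) (by simp)

end MetricSpace

variable {ι : Type*} [Fintype ι] {A : Set (ι → ℝ)} {σ b : ι → ℝ} {T : Finset ι} {δ : ℝ}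

lemma inter_orthant_inter_nonempty (hA : IsWeaklyExternallyHyperconvex A) (hσ : ∀ i, |σ i| = 1)
    (hAT : (A ∩ orthant σ b T).Nonempty) {S : Set ((ι → ℝ) × ℝ)}
    (hS : ∀ q ∈ S, q.1 ∈ A) (hSS : ∀ q ∈ S, ∀ q' ∈ S, dist q.1 q'.1 ≤ q.2 + q'.2)
    (hST : ∀ q ∈ S, q.1 ∈ orthant σ (fun i ↦ b i + q.2) T) :
    (A ∩ (orthant σ b T ∩ ⋂ q ∈ S, Metric.closedBall q.1 q.2)).Nonempty := by
  obtain rfl | ⟨q₀, hq₀⟩ := S.eq_empty_or_nonempty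
  · simpa using hAT
  obtain ⟨z, hzA, hzT⟩ := hAT
  have hq₀_radius : 0 ≤ q₀.2 := by linarith [hSS q₀ hq₀ q₀ hq₀, dist_self q₀.1]
  obtain ⟨x, R, hxR, hx⟩ := exists_closedBall_subset_orthant hσ b T q₀.1
    (add_nonneg hq₀_radius (dist_nonneg (x := z) (y := q₀.1)))
  have hxz : Metric.infDist x A ≤ R := by
    refine (Metric.infDist_le_dist_of_mem hzA).trans ?_
    simpa using hx z 0 (by simpa using hzT) (by linarith)
  have hxS : ∀ q ∈ S, dist x q.1 ≤ R + q.2 := fun q hq ↦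
    hx q.1 q.2 (hST q hq) (by linarith [hSS q hq q₀ hq₀, dist_nonneg (x := z) (y := q₀.1)])
  exact (hA.inter_closedBall_inter_nonempty hxz hS hSS hxS).mono <|
    Set.inter_subset_inter_right A <| Set.inter_subset_inter_left _ hxR

lemma exists_mem_orthant_dist_le_dist_le (hA : IsWeaklyExternallyHyperconvex A)
    (hσ : ∀ i, |σ i| = 1) (hAT : (A ∩ orthant σ b T).Nonempty) {x y : ι → ℝ} {r s : ℝ}
    (hx : x ∈ A) (hy : y ∈ A) (hr : 0 ≤ r) (hs : 0 ≤ s) (hxy : dist x y ≤ r + s)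
    (hxT : x ∈ orthant σ (fun i ↦ b i + r) T) (hyT : y ∈ orthant σ (fun i ↦ b i + s) T) :
    ∃ z ∈ A ∩ orthant σ b T, dist z x ≤ r ∧ dist z y ≤ s := by
  have hyx : dist y x ≤ s + r := by rwa [dist_comm, add_comm]
  obtain ⟨z, hzA, hzT, hz⟩ := hA.inter_orthant_inter_nonempty hσ hAT (S := {(x, r), (y, s)})
    (by simp [hx, hy]) (by simp [hr, hs, hxy, hyx]) (by simp [hxT, hyT])
  exact ⟨z, ⟨hzA, hzT⟩, by simpa using hz⟩

lemma exists_mem_orthant_dist_le (hA : IsWeaklyExternallyHyperconvex A) (hσ : ∀ i, |σ i| = 1)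
    (hAT : (A ∩ orthant σ b T).Nonempty) {x : ι → ℝ} {r : ℝ} (hx : x ∈ A) (hr : 0 ≤ r)
    (hxT : x ∈ orthant σ (fun i ↦ b i + r) T) : ∃ z ∈ A ∩ orthant σ b T, dist z x ≤ r := by
  obtain ⟨z, hz, hzx, -⟩ := hA.exists_mem_orthant_dist_le_dist_le hσ hAT hx hx hr hr
    (by rw [dist_self]; positivity) hxT hxT
  exact ⟨z, hz, hzx⟩

section Erase

variable [DecidableEq ι] {i j k : ι}

lemma exists_mem_orthant_erase_le_half (hA : IsWeaklyExternallyHyperconvex A)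
    (hσ : ∀ i, |σ i| = 1) (hi : i ∈ T) (hij : i ≠ j) (hik : i ≠ k) (hjk : j ≠ k)
    (hAj : (A ∩ orthant σ b (T.erase j)).Nonempty) (hAk : (A ∩ orthant σ b (T.erase k)).Nonempty)
    (hδ : 0 ≤ δ) {y : ι → ℝ} (hy : y ∈ A ∩ orthant σ b (T.erase i)) (hyi : σ i * y i ≤ b i + δ) :
    ∃ z ∈ A ∩ orthant σ b (T.erase i), σ i * z i ≤ b i + δ / 2 := by
  have hδ₂ : 0 ≤ δ / 2 := by positivity
  have le_add {η : ℝ} (hη : 0 ≤ η) : b ≤ fun i ↦ b i + η := fun i ↦ le_add_of_nonneg_right hη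
  have hyT := mem_orthant_add_of_mem_erase hδ hy.2 hyi
  obtain ⟨u, hu, huy⟩ := hA.exists_mem_orthant_dist_le hσ hAj hy.1 hδ
    (orthant_subset_orthant le_rfl (T.erase_subset j) hyT)
  have huT : u ∈ orthant σ (fun i ↦ b i + δ) T :=
    mem_orthant_of_mem_erase_of_mem_erase hij (mem_orthant_add_of_dist_le hσ hy.2 huy)
      (orthant_subset_orthant (le_add hδ) subset_rfl hu.2)
  obtain ⟨v, hv, hvu⟩ := hA.exists_mem_orthant_dist_le hσ hAk hu.1 hδ
    (orthant_subset_orthant le_rfl (T.erase_subset k) huT)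
  have erase_erase_subset : (T.erase j).erase k ⊆ T.erase k :=
    Finset.erase_subset_erase k (T.erase_subset j)
  obtain ⟨w, ⟨hwA, hwjk⟩, hwu, hwv⟩ := hA.exists_mem_orthant_dist_le_dist_le hσ
    (hAj.mono <| Set.inter_subset_inter_right A <|
      orthant_subset_orthant le_rfl ((T.erase j).erase_subset k))
    hu.1 hv.1 hδ₂ hδ₂ (by rwa [add_halves, dist_comm])
    (orthant_subset_orthant (le_add hδ₂) ((T.erase j).erase_subset k) hu.2)
    (orthant_subset_orthant (le_add hδ₂) erase_erase_subset hv.2)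
  have hwT : w ∈ orthant σ (fun i ↦ b i + δ / 2) T :=
    mem_orthant_of_mem_erase_of_mem_erase hjk (mem_orthant_add_of_dist_le hσ hu.2 hwu)
      (mem_orthant_add_of_dist_le hσ hv.2 hwv)
  obtain ⟨z, hz, hzw⟩ := hA.exists_mem_orthant_dist_le hσ ⟨y, hy⟩ hwA hδ₂
    (orthant_subset_orthant le_rfl (T.erase_subset i) hwT)
  have hwi : σ i * w i ≤ b i :=
    hwjk i (Finset.mem_erase.2 ⟨hik, Finset.mem_erase.2 ⟨hij, hi⟩⟩)
  exact ⟨z, hz, (sign_mul_le_add_dist (hσ i) w z).trans (add_le_add hwi hzw)⟩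

lemma inter_orthant_add_nonempty_of_erase (hA : IsWeaklyExternallyHyperconvex A)
    (hσ : ∀ i, |σ i| = 1) (hi : i ∈ T) (hij : i ≠ j) (hik : i ≠ k) (hjk : j ≠ k)
    (hAi : (A ∩ orthant σ b (T.erase i)).Nonempty) (hAj : (A ∩ orthant σ b (T.erase j)).Nonempty)
    (hAk : (A ∩ orthant σ b (T.erase k)).Nonempty) (hδ : 0 < δ) :
    (A ∩ orthant σ (fun i ↦ b i + δ) T).Nonempty := by
  obtain ⟨y, hy⟩ := hAi
  set D := |σ i * y i - b i| + 1
  have hDpos : 0 < D := by positivity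
  have halved (N : ℕ) :
      ∃ z ∈ A ∩ orthant σ b (T.erase i), σ i * z i ≤ b i + D * (1 / 2) ^ N := by
    induction N with
    | zero => exact ⟨y, hy, by linarith [le_abs_self (σ i * y i - b i)]⟩
    | succ N ih =>
      obtain ⟨z, hz, hzi⟩ := ih
      obtain ⟨w, hw, hwi⟩ := hA.exists_mem_orthant_erase_le_half hσ hi hij hik hjk hAj hAk
        (by positivity) hz hzi
      exact ⟨w, hw, hwi.trans_eq (by ring)⟩
  obtain ⟨N, hN⟩ := exists_pow_lt_of_lt_one (div_pos hδ hDpos) one_half_lt_one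
  obtain ⟨z, hz, hzi⟩ := halved N
  refine ⟨z, hz.1, mem_orthant_add_of_mem_erase hδ.le hz.2 (hzi.trans ?_)⟩
  linarith [(lt_div_iff₀' hDpos).1 hN]

end Erase

lemma inter_orthant_add_nonempty_of_forall_card_le_two (hA : IsWeaklyExternallyHyperconvex A)
    (hσ : ∀ i, |σ i| = 1) (h : ∀ t ⊆ T, t.card ≤ 2 → (A ∩ orthant σ b t).Nonempty) (hδ : 0 < δ) :
    (A ∩ orthant σ (fun i ↦ b i + δ) T).Nonempty := by
  classical
  induction T using Finset.strongInduction generalizing δ with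
  | H T ih =>
  obtain hT | hT := le_or_gt T.card 2
  · exact (h T subset_rfl hT).mono <| Set.inter_subset_inter_right A <|
      orthant_subset_orthant (fun i ↦ le_add_of_nonneg_right hδ.le) subset_rfl
  · obtain ⟨i, j, k, hi, hj, hk, hij, hik, hjk⟩ := Finset.two_lt_card_iff.1 hT
    have erase_nonempty : ∀ l ∈ T, (A ∩ orthant σ (fun i ↦ b i + δ / 2) (T.erase l)).Nonempty :=
      fun l hl ↦ ih _ (Finset.erase_ssubset hl)
        (fun t ht ↦ h t (ht.trans (T.erase_subset l))) (half_pos hδ)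
    simpa only [add_assoc, add_halves] using
      hA.inter_orthant_add_nonempty_of_erase hσ hi hij hik hjk (erase_nonempty i hi)
        (erase_nonempty j hj) (erase_nonempty k hk) (half_pos hδ)

lemma mem_of_forall_inter_orthant_nonempty (hA : IsWeaklyExternallyHyperconvex A) {p : ι → ℝ}
    (h : ∀ σ : ι → ℝ, (∀ i, |σ i| = 1) → ∀ t : Finset ι, t.card ≤ 2 →
      (A ∩ orthant σ (σ * p) t).Nonempty) : p ∈ A := by
  obtain ⟨y, hyA, hyp⟩ := hA.exists_mem_dist_le_infDist p
  set d := Metric.infDist p A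
  obtain hd0 | hdpos := (Metric.infDist_nonneg : 0 ≤ d).eq_or_lt
  · rwa [← dist_le_zero.1 (hyp.trans_eq hd0.symm)]
  exfalso
  let σ : ι → ℝ := fun i ↦ if p i ≤ y i then 1 else -1
  have hσ (i : ι) : |σ i| = 1 := by
    dsimp only [σ]
    split_ifs <;> simp
  have hyT : y ∈ orthant σ (fun i ↦ (σ * p) i + d / 2 + d / 2) Finset.univ := fun i _ ↦ by
    simpa only [add_assoc, add_halves, Pi.mul_apply] using
      (sign_mul_le_add_dist (hσ i) p y).trans (add_le_add_right hyp _)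
  obtain ⟨z, ⟨hzA, hzT⟩, hzy⟩ := hA.exists_mem_orthant_dist_le hσ
    (hA.inter_orthant_add_nonempty_of_forall_card_le_two hσ (fun t _ ↦ h σ hσ t) (half_pos hdpos))
    hyA (half_pos hdpos).le hyT
  have hzp : dist z p ≤ d / 2 := by
    refine (dist_pi_le_iff (half_pos hdpos).le).2 fun i ↦ ?_
    have hzi := hzT i (Finset.mem_univ i)
    have hzyi := (dist_le_pi_dist z y i).trans hzy
    simp only [Pi.mul_apply, σ] at hzi
    rw [Real.dist_eq, abs_le] at hzyi ⊢
    split_ifs at hzi <;> constructor <;> linarith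
  linarith [Metric.infDist_le_dist_of_mem (x := p) hzA, dist_comm p z]

lemma inter_orthant_pair_nonempty [DecidableEq ι] (hA : IsWeaklyExternallyHyperconvex A)
    (hσ : ∀ i, |σ i| = 1) {i j : ι} (hi : ∃ y ∈ A, σ i * y i ≤ b i) (hj : ∃ y ∈ A, σ j * y j ≤ b j)
    (hij : ∃ y ∈ A, σ i * y i + σ j * y j ≤ b i + b j) :
    (A ∩ orthant σ b {i, j}).Nonempty := by
  obtain ⟨a, ha, hsum⟩ := hij
  have slide {k l : ι} (hl : ∃ y ∈ A, σ l * y l ≤ b l) (hlt : b l < σ l * a l)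
      (hsum : σ k * a k + σ l * a l ≤ b k + b l) : (A ∩ orthant σ b {k, l}).Nonempty := by
    obtain ⟨z, ⟨hzA, hzl⟩, hza⟩ := hA.exists_mem_orthant_dist_le hσ (T := {l})
      (by simpa [Set.Nonempty, orthant] using hl) ha (sub_nonneg.2 hlt.le) (by simp [orthant])
    refine ⟨z, hzA, ?_⟩
    have hzk : σ k * z k ≤ b k := by linarith [sign_mul_le_add_dist (hσ k) a z]
    simpa [orthant, hzk] using hzl
  obtain haj | haj := lt_or_ge (b j) (σ j * a j)
  · exact slide hj haj hsum
  obtain hai | hai := lt_or_ge (b i) (σ i * a i)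
  · rw [Finset.pair_comm]
    exact slide hi hai (by linarith)
  · exact ⟨a, ha, by simp [orthant, hai, haj]⟩

protected lemma convex (hA : IsWeaklyExternallyHyperconvex A) : Convex ℝ A := by
  classical
  refine convex_iff_segment_subset.2 fun x hx y hy p hp ↦ ?_
  have exists_le (f : (ι → ℝ) →ₗ[ℝ] ℝ) : ∃ z ∈ A, f z ≤ f p := by
    obtain hfx | hfy := min_le_iff.1
      ((f.concaveOn convex_univ).ge_on_segment (Set.mem_univ x) (Set.mem_univ y) hp)
    exacts [⟨x, hx, hfx⟩, ⟨y, hy, hfy⟩]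
  refine hA.mem_of_forall_inter_orthant_nonempty fun σ hσ t ht ↦ ?_
  let f (i : ι) : (ι → ℝ) →ₗ[ℝ] ℝ := σ i • LinearMap.proj i
  interval_cases ht' : t.card
  · rw [Finset.card_eq_zero.1 ht']
    exact ⟨x, hx, by simp [orthant]⟩
  · obtain ⟨i, rfl⟩ := Finset.card_eq_one.1 ht'
    obtain ⟨z, hz, hzi⟩ := exists_le (f i)
    exact ⟨z, hz, by simpa [orthant, f] using hzi⟩
  · obtain ⟨i, j, -, rfl⟩ := Finset.card_eq_two.1 ht'
    exact hA.inter_orthant_pair_nonempty hσ (exists_le (f i)) (exists_le (f j))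
      (exists_le (f i + f j))

end IsWeaklyExternallyHyperconvex

theorem helly_weaklyExternallyHyperconvex_general {κ ι : Type*} [Fintype κ] (s : Finset ι)
    (A : ι → Set (κ → ℝ)) (hA : ∀ i ∈ s, IsWeaklyExternallyHyperconvex (A i))
    (h : ∀ t ⊆ s, t.card ≤ Fintype.card κ + 1 → (⋂ i ∈ t, A i).Nonempty) :
    (⋂ i ∈ s, A i).Nonempty :=
  Convex.helly_theorem' (𝕜 := ℝ) (fun i hi ↦ (hA i hi).convex) fun t ht hcard ↦
    h t ht (by rwa [Module.finrank_fintype_fun_eq_card] at hcard)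

/-- Helly theorem for weakly externally hyperconvex subsets of `l∞ⁿ = (ℝⁿ, ‖·‖_∞)`
(note that `Fin n → ℝ` carries the sup metric): if every subfamily of at most `n + 1`
members of a finite family of weakly externally hyperconvex sets has a common point, then
the whole family has a common point. -/
theorem helly_weaklyExternallyHyperconvex (n : ℕ) (ι : Type*) (s : Finset ι)
    (A : ι → Set (Fin n → ℝ))
    (hA : ∀ i ∈ s, IsWeaklyExternallyHyperconvex (A i))
    (h : ∀ t ⊆ s, t.card ≤ n + 1 → (⋂ i ∈ t, A i).Nonempty) :
    (⋂ i ∈ s, A i).Nonempty :=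
  helly_weaklyExternallyHyperconvex_general s A hA (by rwa [Fintype.card_fin])
end
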